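/- There exists an absolute constant c > 0 such that for every positive integer n and every convex polytope P ⊂ ℝⁿ with nonempty interior that is symmetric about the origin (P = -P), one has log|V| · log|𝓕| ≥ c·n, where V is the set of vertices (0-dimensional faces) of P and 𝓕 is the set of facets ((n-1)-dimensional faces) of P. -/

import Mathlib

open Set

/-- `F` is a `k`-dimensional face of the convex set `P`: a nonempty convex
extreme subset of `P` whose affine hull has dimension `k`. -/
def IsFaceOfDim {n : ℕ} (P F : Set (EuclideanSpace ℝ (Fin n))) (k : ℕ) : Prop :=
  F.Nonempty ∧ Convex ℝ F ∧ IsExtreme ℝ P F ∧ Module.finrank ℝ (vectorSpan ℝ F) = k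

open scoped Matrix

/-- The exponential moment of a Rademacher sum is at most that of a Gaussian. -/
theorem sum_sign_exp_le {n : ℕ} (a : Fin n → ℝ) (s : ℝ) :
    ∑ ε : Fin n → ℤˣ, Real.exp (s * ∑ i, ((ε i : ℤ) : ℝ) * a i)
      ≤ 2 ^ n * Real.exp (s ^ 2 * (a ⬝ᵥ a) / 2) := by
  have h1 : ∀ ε : Fin n → ℤˣ, Real.exp (s * ∑ i, ((ε i : ℤ) : ℝ) * a i)
      = ∏ i, Real.exp (s * (((ε i : ℤ) : ℝ) * a i)) := fun ε => by
    rw [Finset.mul_sum, Real.exp_sum]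
  simp_rw [h1]
  rw [← Fintype.prod_sum fun (i : Fin n) (e : ℤˣ) => Real.exp (s * (((e : ℤ) : ℝ) * a i))]
  have h2 : ∀ i, ∑ e : ℤˣ, Real.exp (s * (((e : ℤ) : ℝ) * a i))
      ≤ 2 * Real.exp ((s * a i) ^ 2 / 2) := fun i => by
    have : (Finset.univ : Finset ℤˣ) = {1, -1} := rfl
    rw [this, Finset.sum_pair (by decide)]
    have := Real.cosh_le_exp_half_sq (s * a i)
    rw [Real.cosh_eq] at this
    simp only [Units.val_one, Units.val_neg, Int.cast_one, Int.cast_neg, one_mul, neg_mul, mul_neg]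
    linarith
  refine (Finset.prod_le_prod (fun i _ => Finset.sum_nonneg fun _ _ => (Real.exp_pos _).le)
    fun i _ => h2 i).trans_eq ?_
  rw [Finset.prod_mul_distrib, ← Real.exp_sum]
  simp only [Finset.prod_const, Finset.card_univ, Fintype.card_fin, dotProduct]
  congr 2
  rw [Finset.mul_sum, Finset.sum_div]
  exact Finset.sum_congr rfl fun i _ => by ring

/-- The exponential moments, summed over a family and normalised, average to at most one. -/
theorem sum_sign_sum_exp_le {n : ℕ} {ι : Type*} [Fintype ι] (a : ι → Fin n → ℝ) {σ : ℝ}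
    (ha : ∀ i, a i ⬝ᵥ a i ≤ σ ^ 2) (s : ℝ) :
    ∑ ε : Fin n → ℤˣ, ∑ j, Real.exp (s * ∑ i, ((ε i : ℤ) : ℝ) * a j i)
      ≤ 2 ^ n * (Fintype.card ι * Real.exp (s ^ 2 * σ ^ 2 / 2)) := by
  rw [Finset.sum_comm]
  calc _ ≤ ∑ _j : ι, 2 ^ n * Real.exp (s ^ 2 * σ ^ 2 / 2) := by
        refine Finset.sum_le_sum fun j _ => (sum_sign_exp_le (a j) s).trans ?_
        have := ha j
        gcongr
    _ = _ := by simp; ring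

theorem le_two_mul_sqrt_log {N σ s z : ℝ} (hN : 2 ≤ N) (hσ : 0 < σ)
    (hs : s = Real.sqrt (2 * Real.log (2 * N)) / σ)
    (h : Real.exp (s * z) ≤ 2 * N * Real.exp (s ^ 2 * σ ^ 2 / 2)) :
    z ≤ 2 * σ * Real.sqrt (Real.log N) := by
  have hL : 0 < Real.log (2 * N) := Real.log_pos (by linarith)
  have h1 : s * z ≤ Real.log (2 * N) + s ^ 2 * σ ^ 2 / 2 := by
    rw [← Real.exp_le_exp, Real.exp_add, Real.exp_log (by linarith)]
    exact h
  set r := Real.sqrt (2 * Real.log (2 * N)) with hr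
  have hr0 : 0 < r := Real.sqrt_pos.2 (by linarith)
  have hr2 : r ^ 2 = 2 * Real.log (2 * N) := Real.sq_sqrt (by linarith)
  have hsσ : s * σ = r := by rw [hs]; field_simp
  have h2 : r * z ≤ σ * r ^ 2 := by
    have : s * z * σ ≤ r ^ 2 * σ := by
      gcongr
      rw [← mul_pow, hsσ] at h1
      linarith
    calc r * z = s * z * σ := by rw [← hsσ]; ring
      _ ≤ _ := by linarith
  have h3 : z ≤ σ * r := by
    rw [pow_two] at h2
    nlinarith
  have h4 : r ≤ 2 * Real.sqrt (Real.log N) := by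
    have : (2 : ℝ) * Real.sqrt (Real.log N) = Real.sqrt (4 * Real.log N) := by
      rw [Real.sqrt_mul (by norm_num), show (4 : ℝ) = 2 ^ 2 by norm_num,
        Real.sqrt_sq (by norm_num)]
    rw [this, hr]
    apply Real.sqrt_le_sqrt
    have h5 := Real.log_le_log (by norm_num) hN
    rw [Real.log_mul (by norm_num) (by linarith)]
    linarith
  calc z ≤ σ * r := h3
    _ ≤ σ * (2 * Real.sqrt (Real.log N)) := by gcongr
    _ = _ := by ring

/-- Some sign vector has small inner products with all members of two given finite families. -/
theorem exists_sign_dotProduct_le {n : ℕ} {ι κ : Type*} [Fintype ι] [Fintype κ]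
    (hι : 2 ≤ Fintype.card ι) (hκ : 2 ≤ Fintype.card κ)
    (a : ι → Fin n → ℝ) (b : κ → Fin n → ℝ) {σ τ : ℝ} (hσ : 0 < σ) (hτ : 0 < τ)
    (ha : ∀ i, a i ⬝ᵥ a i ≤ σ ^ 2) (hb : ∀ k, b k ⬝ᵥ b k ≤ τ ^ 2) :
    ∃ e : Fin n → ℝ, e ⬝ᵥ e = n ∧
      (∀ i, e ⬝ᵥ a i ≤ 2 * σ * Real.sqrt (Real.log (Fintype.card ι))) ∧
      ∀ k, e ⬝ᵥ b k ≤ 2 * τ * Real.sqrt (Real.log (Fintype.card κ)) := by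
  have hι' : (2 : ℝ) ≤ Fintype.card ι := by exact_mod_cast hι
  have hκ' : (2 : ℝ) ≤ Fintype.card κ := by exact_mod_cast hκ
  obtain ⟨s, hs⟩ : ∃ s, s = Real.sqrt (2 * Real.log (2 * Fintype.card ι)) / σ := ⟨_, rfl⟩
  obtain ⟨t, ht⟩ : ∃ t, t = Real.sqrt (2 * Real.log (2 * Fintype.card κ)) / τ := ⟨_, rfl⟩
  set A := (Fintype.card ι : ℝ) * Real.exp (s ^ 2 * σ ^ 2 / 2) with hA
  set B := (Fintype.card κ : ℝ) * Real.exp (t ^ 2 * τ ^ 2 / 2) with hB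
  have hA0 : 0 < A := by positivity
  have hB0 : 0 < B := by positivity
  have key : ∑ ε : Fin n → ℤˣ,
      ((∑ j, Real.exp (s * ∑ i, ((ε i : ℤ) : ℝ) * a j i)) / A
        + (∑ j, Real.exp (t * ∑ i, ((ε i : ℤ) : ℝ) * b j i)) / B)
      ≤ ∑ _ε : Fin n → ℤˣ, (2 : ℝ) := by
    rw [Finset.sum_add_distrib, ← Finset.sum_div, ← Finset.sum_div]
    have h1 := (div_le_iff₀ hA0).2 (sum_sign_sum_exp_le a ha s)
    have h2 := (div_le_iff₀ hB0).2 (sum_sign_sum_exp_le b hb t)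
    have h3 : ∑ _ε : Fin n → ℤˣ, (2 : ℝ) = 2 ^ n * 2 := by simp
    linarith
  obtain ⟨ε, -, hε⟩ := Finset.exists_le_of_sum_le Finset.univ_nonempty key
  have hpos1 : 0 ≤ (∑ j, Real.exp (s * ∑ i, ((ε i : ℤ) : ℝ) * a j i)) / A := by positivity
  have hpos2 : 0 ≤ (∑ j, Real.exp (t * ∑ i, ((ε i : ℤ) : ℝ) * b j i)) / B := by positivity
  refine ⟨fun i => ((ε i : ℤ) : ℝ), ?_, fun j => ?_, fun j => ?_⟩
  · have : ∀ i, ((ε i : ℤ) : ℝ) * ((ε i : ℤ) : ℝ) = 1 := fun i => by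
      rcases Int.units_eq_one_or (ε i) with h | h <;> simp [h]
    simp [dotProduct, this]
  · refine le_two_mul_sqrt_log hι' hσ hs ?_
    have h1 : (∑ j, Real.exp (s * ∑ i, ((ε i : ℤ) : ℝ) * a j i)) ≤ 2 * A :=
      (div_le_iff₀ hA0).1 (by linarith)
    rw [mul_assoc]
    exact (Finset.single_le_sum (f := fun j => Real.exp (s * ∑ i, ((ε i : ℤ) : ℝ) * a j i))
      (fun _ _ => (Real.exp_pos _).le) (Finset.mem_univ j)).trans h1
  · refine le_two_mul_sqrt_log hκ' hτ ht ?_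
    have h1 : (∑ j, Real.exp (t * ∑ i, ((ε i : ℤ) : ℝ) * b j i)) ≤ 2 * B :=
      (div_le_iff₀ hB0).1 (by linarith)
    rw [mul_assoc]
    exact (Finset.single_le_sum (f := fun j => Real.exp (t * ∑ i, ((ε i : ℤ) : ℝ) * b j i))
      (fun _ _ => (Real.exp_pos _).le) (Finset.mem_univ j)).trans h1

/-- The second moment matrix of a weighted family of vectors. -/
def momentMatrix {n : ℕ} {ι : Type*} [Fintype ι] (v : ι → Fin n → ℝ) (p : ι → ℝ) :
    Matrix (Fin n) (Fin n) ℝ :=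
  ∑ i, p i • Matrix.vecMulVec (v i) (v i)

section momentMatrix

variable {n : ℕ} {ι : Type*} [Fintype ι]

theorem momentMatrix_quadratic (v : ι → Fin n → ℝ) (p : ι → ℝ) (x : Fin n → ℝ) :
    x ⬝ᵥ (momentMatrix v p *ᵥ x) = ∑ i, p i * (v i ⬝ᵥ x) ^ 2 := by
  rw [momentMatrix, Matrix.sum_mulVec, dotProduct_sum]
  refine Finset.sum_congr rfl fun i _ => ?_
  rw [Matrix.smul_mulVec, Matrix.vecMulVec_mulVec, dotProduct_smul, dotProduct_smul,
    dotProduct_comm x]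
  simp only [op_smul_eq_smul, smul_eq_mul]
  ring

theorem momentMatrix_isHermitian (v : ι → Fin n → ℝ) (p : ι → ℝ) :
    (momentMatrix v p).IsHermitian := by
  unfold Matrix.IsHermitian momentMatrix
  ext a b
  simp [Matrix.sum_apply, Matrix.vecMulVec_apply, mul_comm]

theorem momentMatrix_posSemidef (v : ι → Fin n → ℝ) {p : ι → ℝ} (hp : ∀ i, 0 ≤ p i) :
    (momentMatrix v p).PosSemidef := by
  refine Matrix.PosSemidef.of_dotProduct_mulVec_nonneg (momentMatrix_isHermitian v p) fun x => ?_
  rw [star_trivial, momentMatrix_quadratic]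
  exact Finset.sum_nonneg fun i _ => mul_nonneg (hp i) (sq_nonneg _)

theorem momentMatrix_posDef {v : ι → Fin n → ℝ} (hv : ∀ x, (∀ i, v i ⬝ᵥ x = 0) → x = 0)
    {p : ι → ℝ} (hp : ∀ i, 0 < p i) : (momentMatrix v p).PosDef := by
  refine Matrix.PosDef.of_dotProduct_mulVec_pos (momentMatrix_isHermitian v p) fun x hx => ?_
  rw [star_trivial, momentMatrix_quadratic]
  have hnn : ∀ i ∈ Finset.univ, 0 ≤ p i * (v i ⬝ᵥ x) ^ 2 :=
    fun i _ => mul_nonneg (hp i).le (sq_nonneg _)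
  refine (Finset.sum_nonneg hnn).lt_of_ne fun h => hx (hv x fun i => ?_)
  have := (Finset.sum_eq_zero_iff_of_nonneg hnn).1 h.symm i (Finset.mem_univ i)
  simpa [(hp i).ne'] using this

theorem continuous_momentMatrix (v : ι → Fin n → ℝ) : Continuous (momentMatrix v) := by
  unfold momentMatrix
  fun_prop

theorem momentMatrix_mix (v : ι → Fin n → ℝ) [DecidableEq ι] (p : ι → ℝ) (j : ι) (t : ℝ) :
    momentMatrix v ((1 - t) • p + t • Pi.single j 1)
      = (1 - t) • momentMatrix v p + t • Matrix.vecMulVec (v j) (v j) := by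
  simp only [momentMatrix, Pi.add_apply, Pi.smul_apply, smul_eq_mul, add_smul,
    Finset.sum_add_distrib, Finset.smul_sum, mul_smul]
  congr 1
  rw [Finset.sum_eq_single j] <;> simp +contextual

/-- Determinant of a rank-one mixture. -/
theorem det_mix_vecMulVec {M : Matrix (Fin n) (Fin n) ℝ} (hM : IsUnit M.det) (w : Fin n → ℝ)
    {t : ℝ} (ht : t < 1) :
    ((1 - t) • M + t • Matrix.vecMulVec w w).det * (1 - t)
      = (1 - t) ^ n * M.det * (1 - t + t * (w ⬝ᵥ (M⁻¹ *ᵥ w))) := by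
  have ht' : 1 - t ≠ 0 := by linarith
  have h1 : (1 - t) • M + t • Matrix.vecMulVec w w
      = (1 - t) • (M + Matrix.replicateCol Unit ((t / (1 - t)) • w) *
        Matrix.replicateRow Unit w) := by
    rw [← Matrix.vecMulVec_eq, smul_add, Matrix.smul_vecMulVec, smul_smul, mul_div_cancel₀ _ ht']
  rw [h1, Matrix.det_smul, Matrix.det_add_replicateCol_mul_replicateRow hM,
    Matrix.det_unique (n := Unit)]
  have h2 : (1 + Matrix.replicateRow Unit w * M⁻¹ *
      Matrix.replicateCol Unit ((t / (1 - t)) • w) : Matrix Unit Unit ℝ) default default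
      = 1 + t / (1 - t) * (w ⬝ᵥ (M⁻¹ *ᵥ w)) := by
    rw [Matrix.mul_assoc, Matrix.add_apply, Matrix.one_apply_eq]
    congr 1
    rw [Matrix.replicateCol_smul, Matrix.mul_smul, Matrix.mul_smul, Matrix.smul_apply,
      ← Matrix.replicateCol_mulVec, Matrix.replicateRow_mul_replicateCol_apply, smul_eq_mul]
  rw [h2]
  simp
  field_simp

theorem le_of_forall_pow_mul_le {q : ℝ}
    (h : ∀ t : ℝ, 0 < t → t < 1 → (1 - t) ^ n * (1 - t + t * q) ≤ 1 - t) : q ≤ n := by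
  by_contra! hq
  have hn : (0 : ℝ) ≤ n := Nat.cast_nonneg n
  have hq0 : 0 < q := hn.trans_lt hq
  have hev : ∀ t : ℝ, 0 < t → t < 1 → q - n ≤ t * (n * q) := fun t ht ht1 => by
    have hb := one_add_mul_le_pow (show (-2 : ℝ) ≤ -t by linarith) n
    have h0 : 0 ≤ 1 - t + t * q := by nlinarith
    rw [← sub_eq_add_neg] at hb
    have h2 := (mul_le_mul_of_nonneg_right hb h0).trans (h t ht ht1)
    have h3 : t * (q - n) ≤ t * (t * (n * q)) := by nlinarith [mul_nonneg hn (sq_nonneg t)]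
    exact le_of_mul_le_mul_left h3 ht
  have h1 : 0 < (q - n) / (2 * (n * q + q)) := by
    have : 0 < q - n := by linarith
    positivity
  have h2 : (q - n) / (2 * (n * q + q)) < 1 := by
    rw [div_lt_one (by positivity)]
    nlinarith
  have h3 := hev _ h1 h2
  rw [div_mul_eq_mul_div, le_div_iff₀ (by positivity)] at h3
  nlinarith [mul_pos (sub_pos.2 hq) hq0, mul_nonneg (sub_pos.2 hq).le (mul_nonneg hn hq0.le)]

/-- **Kiefer–Wolfowitz**: for the weights maximising the determinant of the moment matrix, the
inverse moment matrix is at most `n` on the family. -/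
theorem exists_momentMatrix_inv_le [Nonempty ι] {v : ι → Fin n → ℝ}
    (hv : ∀ x, (∀ i, v i ⬝ᵥ x = 0) → x = 0) :
    ∃ p : ι → ℝ, p ∈ stdSimplex ℝ ι ∧ IsUnit (momentMatrix v p).det ∧
      ∀ i, v i ⬝ᵥ ((momentMatrix v p)⁻¹ *ᵥ v i) ≤ n := by
  classical
  have hc : (0 : ℝ) < Fintype.card ι := by exact_mod_cast Fintype.card_pos
  have hu : (fun _ => (Fintype.card ι : ℝ)⁻¹) ∈ stdSimplex ℝ ι :=
    ⟨fun _ => by positivity, by simp [hc.ne']⟩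
  obtain ⟨p, hp, hmax⟩ := (isCompact_stdSimplex ℝ ι).exists_isMaxOn ⟨_, hu⟩
    (continuous_momentMatrix v).matrix_det.continuousOn
  have hdet : 0 < (momentMatrix v p).det :=
    (momentMatrix_posDef hv (p := fun _ => (Fintype.card ι : ℝ)⁻¹)
      fun _ => by positivity).det_pos.trans_le (hmax hu)
  have hunit : IsUnit (momentMatrix v p).det := hdet.ne'.isUnit
  refine ⟨p, hp, hunit, fun i => le_of_forall_pow_mul_le fun t ht ht1 => ?_⟩
  have hmem : (1 - t) • p + t • Pi.single i 1 ∈ stdSimplex ℝ ι :=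
    convex_stdSimplex ℝ ι hp (single_mem_stdSimplex ℝ i) (by linarith) ht.le (by ring)
  have h1 : (momentMatrix v ((1 - t) • p + t • Pi.single i 1)).det ≤ (momentMatrix v p).det :=
    hmax hmem
  have h2 := det_mix_vecMulVec hunit (v i) ht1
  rw [← momentMatrix_mix] at h2
  have h3 := mul_le_mul_of_nonneg_right h1 (show 0 ≤ 1 - t by linarith)
  rw [h2] at h3
  refine le_of_mul_le_mul_left ?_ hdet
  linarith

end momentMatrix

open scoped MatrixOrder in
theorem exists_transpose_mul_self {n : ℕ} {M : Matrix (Fin n) (Fin n) ℝ} (hM : M.PosSemidef) :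
    ∃ B : Matrix (Fin n) (Fin n) ℝ, M = Bᵀ * B := by
  obtain ⟨B, hB⟩ := CStarAlgebra.nonneg_iff_eq_star_mul_self.mp hM.nonneg
  exact ⟨B, by rw [hB]; rfl⟩

/-- For two finite families with mutual inner products in `[-1, 1]`, the first one spanning, there
are vectors `x`, `y` with `x ⬝ᵥ y = n` on which the families are small. -/
theorem exists_dotProduct_eq_and_le {n : ℕ} (hn : 0 < n) {ι κ : Type*} [Fintype ι] [Fintype κ]
    (hι : 2 ≤ Fintype.card ι) (hκ : 2 ≤ Fintype.card κ)
    {v : ι → Fin n → ℝ} {w : κ → Fin n → ℝ}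
    (hv : ∀ x, (∀ i, v i ⬝ᵥ x = 0) → x = 0) (hvw : ∀ i k, |v i ⬝ᵥ w k| ≤ 1) :
    ∃ x y : Fin n → ℝ, x ⬝ᵥ y = n ∧
      (∀ k, w k ⬝ᵥ x ≤ 2 * Real.sqrt (Real.log (Fintype.card κ))) ∧
      ∀ i, v i ⬝ᵥ y ≤ 2 * Real.sqrt n * Real.sqrt (Real.log (Fintype.card ι)) := by
  have : Nonempty ι := Fintype.card_pos_iff.1 (by omega)
  obtain ⟨p, hp, hdet, hle⟩ := exists_momentMatrix_inv_le hv
  obtain ⟨B, hB⟩ := exists_transpose_mul_self (momentMatrix_posSemidef v hp.1)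
  have hBdet : IsUnit B.det := by
    rw [hB, Matrix.det_mul] at hdet
    exact (IsUnit.mul_iff.1 hdet).2
  have hswap : ∀ (A : Matrix (Fin n) (Fin n) ℝ) (a b : Fin n → ℝ),
      a ⬝ᵥ (A *ᵥ b) = b ⬝ᵥ (Aᵀ *ᵥ a) := fun A a b => by
    rw [Matrix.dotProduct_mulVec, dotProduct_comm, Matrix.mulVec_transpose]
  have hw : ∀ k, (B *ᵥ w k) ⬝ᵥ (B *ᵥ w k) ≤ 1 ^ 2 := fun k => by
    rw [hswap, Matrix.mulVec_mulVec, ← hB, momentMatrix_quadratic, one_pow, ← hp.2]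
    refine Finset.sum_le_sum fun i _ => mul_le_of_le_one_right (hp.1 i) ?_
    exact (sq_le_one_iff_abs_le_one _).2 (hvw i k)
  have hv' : ∀ i, (B⁻¹ᵀ *ᵥ v i) ⬝ᵥ (B⁻¹ᵀ *ᵥ v i) ≤ Real.sqrt n ^ 2 := fun i => by
    rw [hswap, Matrix.mulVec_mulVec, Matrix.transpose_transpose, Real.sq_sqrt (Nat.cast_nonneg n)]
    have := hle i
    rwa [hB, Matrix.mul_inv_rev, ← Matrix.transpose_nonsing_inv] at this
  obtain ⟨e, he, hea, heb⟩ := exists_sign_dotProduct_le hκ hι (fun k => B *ᵥ w k)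
    (fun i => B⁻¹ᵀ *ᵥ v i) one_pos (Real.sqrt_pos.2 (Nat.cast_pos.2 hn)) hw hv'
  refine ⟨Bᵀ *ᵥ e, B⁻¹ *ᵥ e, ?_, fun k => ?_, fun i => ?_⟩
  · rw [dotProduct_comm, hswap, Matrix.transpose_transpose, Matrix.mulVec_mulVec,
      Matrix.mul_nonsing_inv _ hBdet, Matrix.one_mulVec, he]
  · rw [hswap, Matrix.transpose_transpose]
    simpa using hea k
  · rw [hswap]
    exact heb i

section Polar

variable {n : ℕ}

local notation "E" => EuclideanSpace ℝ (Fin n)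

/-- The polar body of a set in Euclidean space. -/
def polarBody (V : Set (EuclideanSpace ℝ (Fin n))) : Set (EuclideanSpace ℝ (Fin n)) :=
  {f | ∀ v ∈ V, inner ℝ f v ≤ 1}

theorem isClosed_polarBody (V : Set E) : IsClosed (polarBody V) := by
  simp only [polarBody, ofPred_forall]
  exact isClosed_biInter fun v _ => isClosed_le (by fun_prop) continuous_const

theorem convex_polarBody (V : Set E) : Convex ℝ (polarBody V) := by
  intro f hf g hg a b ha hb hab v hv
  rw [inner_add_left, real_inner_smul_left, real_inner_smul_left]
  nlinarith [hf v hv, hg v hv]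

theorem polarBody_convexHull (V : Set E) : polarBody (convexHull ℝ V) = polarBody V := by
  refine Subset.antisymm (fun f hf v hv => hf v (subset_convexHull ℝ V hv)) fun f hf v hv => ?_
  have : convexHull ℝ V ⊆ {x | inner ℝ f x ≤ 1} :=
    convexHull_min hf (convex_halfSpace_le ⟨inner_add_right f, fun c x => by
      simp [real_inner_smul_right]⟩ 1)
  exact this hv

theorem isCompact_polarBody {P : Set E} {r : ℝ} (hr : 0 < r) (hP : Metric.closedBall 0 r ⊆ P) :
    IsCompact (polarBody P) := by
  refine Metric.isCompact_of_isClosed_isBounded (isClosed_polarBody P) ?_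
  refine (Metric.isBounded_closedBall (x := (0 : E)) (r := 1 / r)).subset fun f hf => ?_
  rw [mem_closedBall_zero_iff, le_div_iff₀ hr]
  rcases eq_or_ne f 0 with rfl | hf0
  · simp
  have hf1 : 0 < ‖f‖ := norm_pos_iff.2 hf0
  have h1 := hf ((r / ‖f‖) • f) (hP (by
    rw [mem_closedBall_zero_iff, norm_smul, Real.norm_of_nonneg (by positivity),
      div_mul_cancel₀ _ hf1.ne']))
  rw [real_inner_smul_right, real_inner_self_eq_norm_sq] at h1
  calc ‖f‖ * r = r / ‖f‖ * ‖f‖ ^ 2 := by field_simp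
    _ ≤ 1 := h1

/-- At an extreme point of the polar of a finite set the active constraints span. -/
theorem eq_zero_of_mem_extremePoints_polarBody {V : Set E} (hV : V.Finite) {f h : E}
    (hf : f ∈ (polarBody V).extremePoints ℝ)
    (hh : ∀ v ∈ V, inner ℝ f v = 1 → inner ℝ h v = 0) : h = 0 := by
  have hev : ∀ g : E, (∀ v ∈ V, inner ℝ f v = 1 → inner ℝ g v = 0) →
      ∀ᶠ t : ℝ in nhds 0, f + t • g ∈ polarBody V := fun g hg => by
    refine (Filter.eventually_all_finite hV).2 fun v hv => ?_
    rcases (hf.1 v hv).lt_or_eq with hlt | heq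
    · have hc : Continuous fun t : ℝ => inner ℝ (f + t • g) v := by fun_prop
      exact (hc.tendsto' 0 (inner ℝ f v) (by simp)).eventually_le_const hlt
    · refine Filter.Eventually.of_forall fun t => ?_
      rw [inner_add_left, real_inner_smul_left, hg v hv heq, heq]
      simp
  have h1 := (hev h hh).and (hev (-h) fun v hv hfv => by simp [hh v hv hfv])
  obtain ⟨t, ⟨ht1, ht2⟩, ht⟩ :=
    ((h1.filter_mono nhdsWithin_le_nhds).and (self_mem_nhdsWithin (s := Ioi (0 : ℝ)))).exists
  have h2 := hf.2 ht1 ht2 ⟨1 / 2, 1 / 2, by norm_num, by norm_num, by norm_num, by module⟩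
  have h3 : t • h = 0 := by simpa using h2
  exact (smul_eq_zero.1 h3).resolve_left (ne_of_gt ht)

/-- The set of points of `P` on the hyperplane `⟪f, x⟫ = 1`. -/
def hyperplaneFace (P : Set (EuclideanSpace ℝ (Fin n))) (f : EuclideanSpace ℝ (Fin n)) :
    Set (EuclideanSpace ℝ (Fin n)) :=
  {x ∈ P | inner ℝ f x = 1}

theorem isExtreme_hyperplaneFace {P : Set E} {f : E} (hf : f ∈ polarBody P) :
    IsExtreme ℝ P (hyperplaneFace P f) := by
  refine ⟨fun x hx => hx.1, ?_⟩
  rintro x hx y hy z hz ⟨a, b, ha, hb, hab, rfl⟩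
  refine ⟨hx, le_antisymm (hf x hx) ?_⟩
  have h1 := hz.2
  rw [inner_add_right, real_inner_smul_right, real_inner_smul_right] at h1
  have h2 := hf y hy
  by_contra! hlt
  nlinarith

variable {V : Set (EuclideanSpace ℝ (Fin n))} {f : EuclideanSpace ℝ (Fin n)}

theorem eq_zero_of_forall_mem_hyperplaneFace (hV : V.Finite) {h : E}
    (hf : f ∈ (polarBody V).extremePoints ℝ)
    (hh : ∀ x ∈ hyperplaneFace (convexHull ℝ V) f, inner ℝ h x = 0) : h = 0 :=
  eq_zero_of_mem_extremePoints_polarBody hV hf fun v hv hfv =>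
    hh v ⟨subset_convexHull ℝ V hv, hfv⟩

/-- Extreme points of the polar define facets. -/
theorem isFaceOfDim_hyperplaneFace (hn : 0 < n) (hV : V.Finite)
    (hf : f ∈ (polarBody V).extremePoints ℝ) :
    IsFaceOfDim (convexHull ℝ V) (hyperplaneFace (convexHull ℝ V) f) (n - 1) := by
  have : Nonempty (Fin n) := ⟨⟨0, hn⟩⟩
  have hne : (hyperplaneFace (convexHull ℝ V) f).Nonempty := by
    by_contra hne
    rw [not_nonempty_iff_eq_empty] at hne
    obtain ⟨h, hh⟩ := exists_ne (0 : E)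
    exact hh (eq_zero_of_forall_mem_hyperplaneFace hV hf (by simp [hne]))
  refine ⟨hne, (convex_convexHull ℝ V).inter (convex_hyperplane ⟨inner_add_right f, fun c x => by
      simp [real_inner_smul_right]⟩ 1),
    isExtreme_hyperplaneFace (by rw [polarBody_convexHull]; exact hf.1), ?_⟩
  obtain ⟨x₀, hx₀⟩ := hne
  have hf0 : f ≠ 0 := by
    rintro rfl
    simpa using hx₀.2
  have hW : (vectorSpan ℝ (hyperplaneFace (convexHull ℝ V) f))ᗮ = Submodule.span ℝ {f} := by
    refine le_antisymm (fun g hg => ?_) ?_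
    · have h1 : g - (inner ℝ g x₀ : ℝ) • f = 0 := by
        refine eq_zero_of_forall_mem_hyperplaneFace hV hf fun x hx => ?_
        have h2 := Submodule.inner_left_of_mem_orthogonal (vsub_mem_vectorSpan ℝ hx hx₀) hg
        rw [vsub_eq_sub, inner_sub_right] at h2
        rw [inner_sub_left, real_inner_smul_left, hx.2]
        linarith
      rw [sub_eq_zero.1 h1]
      exact Submodule.smul_mem _ _ (Submodule.mem_span_singleton_self f)
    · rw [Submodule.span_singleton_le_iff_mem, Submodule.mem_orthogonal']
      intro u hu
      rw [vectorSpan_eq_span_vsub_set_right ℝ hx₀] at hu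
      induction hu using Submodule.span_induction with
      | mem u hu =>
        obtain ⟨x, hx, rfl⟩ := hu
        simp only [vsub_eq_sub]
        rw [inner_sub_right, hx.2, hx₀.2, sub_self]
      | zero => simp
      | add a b _ _ ha hb => rw [inner_add_right, ha, hb, add_zero]
      | smul c a _ ha => rw [real_inner_smul_right, ha, mul_zero]
  have h1 := (vectorSpan ℝ (hyperplaneFace (convexHull ℝ V) f)).finrank_add_finrank_orthogonal
  rw [hW, finrank_span_singleton hf0, finrank_euclideanSpace_fin] at h1
  omega

theorem hyperplaneFace_injOn (hV : V.Finite) :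
    InjOn (hyperplaneFace (convexHull ℝ V)) ((polarBody V).extremePoints ℝ) := by
  intro f hf g _ hfg
  refine sub_eq_zero.1 (eq_zero_of_forall_mem_hyperplaneFace hV hf fun x hx => ?_)
  have hxg : x ∈ hyperplaneFace (convexHull ℝ V) g := hfg ▸ hx
  rw [inner_sub_left, hx.2, hxg.2, sub_self]

/-- Points with positive weight in a convex combination
lying in an extreme set lie in that set. -/
theorem IsExtreme.mem_of_sum_smul_mem {P F : Set E} (hext : IsExtreme ℝ P F)
    (hP : Convex ℝ P) {ι : Type*} [Fintype ι] {w : ι → ℝ} {z : ι → E} (hw₀ : ∀ i, 0 ≤ w i)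
    (hw₁ : ∑ i, w i = 1) (hz : ∀ i, z i ∈ P) (hF : ∑ i, w i • z i ∈ F) {i : ι} (hi : 0 < w i) :
    z i ∈ F := by
  classical
  have h1 : w i + ∑ j ∈ Finset.univ.erase i, w j = 1 := by
    rw [Finset.add_sum_erase _ _ (Finset.mem_univ i), hw₁]
  have h2 := Finset.add_sum_erase Finset.univ (fun j => w j • z j) (Finset.mem_univ i)
  have hnn : 0 ≤ ∑ j ∈ Finset.univ.erase i, w j := Finset.sum_nonneg fun j _ => hw₀ j
  rcases hnn.eq_or_lt with h0 | h0
  · have h3 : ∑ j ∈ Finset.univ.erase i, w j • z j = 0 := Finset.sum_eq_zero fun j hj => by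
      rw [(Finset.sum_eq_zero_iff_of_nonneg fun j _ => hw₀ j).1 h0.symm j hj, zero_smul]
    rw [← h0, add_zero] at h1
    simp only [h3, h1, one_smul, add_zero] at h2
    rwa [h2]
  · refine hext.left_mem_of_mem_openSegment (hz i)
      (hP.centerMass_mem (fun j _ => hw₀ j) h0 fun j _ => hz j) hF ⟨_, _, hi, h0, h1, ?_⟩
    rw [Finset.centerMass, smul_smul, mul_inv_cancel₀ (ne_of_gt h0), one_smul, h2]

/-- A polytope has finitely many convex extreme subsets. -/
theorem finite_setOf_convex_isExtreme (hV : V.Finite) :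
    {F : Set E | Convex ℝ F ∧ IsExtreme ℝ (convexHull ℝ V) F}.Finite := by
  refine Set.Finite.of_finite_image (f := fun F => F ∩ V)
    (hV.finite_subsets.subset (by rintro _ ⟨F, -, rfl⟩; exact inter_subset_right)) ?_
  have key : ∀ F : Set E, Convex ℝ F → IsExtreme ℝ (convexHull ℝ V) F →
      F = convexHull ℝ (F ∩ V) := fun F hF hext => by
    refine Subset.antisymm (fun x hx => ?_) (convexHull_min inter_subset_left hF)
    obtain ⟨ι, _, w, z, hw₀, hw₁, hz, rfl⟩ := mem_convexHull_iff_exists_fintype.1 (hext.subset hx)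
    rw [← Finset.sum_filter_of_ne (p := fun i => w i ≠ 0) fun i _ hi => left_ne_zero_of_smul hi]
    refine (convex_convexHull ℝ _).sum_mem (fun i _ => hw₀ i)
      (by rw [Finset.sum_filter_ne_zero, hw₁]) fun i hi => subset_convexHull ℝ _ ⟨?_, hz i⟩
    have hwi := (hw₀ i).lt_of_ne' (Finset.mem_filter.1 hi).2
    exact hext.mem_of_sum_smul_mem (convex_convexHull ℝ V) hw₀ hw₁
      (fun j => subset_convexHull ℝ V (hz j)) hx hwi
  intro F hF G hG hFG
  rw [key F hF.1 hF.2, key G hG.1 hG.2]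
  exact congrArg _ hFG

theorem neg_mem_extremePoints {K : Set E} (hK : K = -K) {e : E} (he : e ∈ K.extremePoints ℝ) :
    -e ∈ K.extremePoints ℝ := by
  have hneg : ∀ x ∈ K, -x ∈ K := fun x hx => by
    rw [hK] at hx
    exact hx
  refine ⟨hneg e he.1, ?_⟩
  rintro x hx y hy ⟨a, b, ha, hb, hab, h⟩
  rw [← he.2 (hneg x hx) (hneg y hy) ⟨a, b, ha, hb, hab, ?_⟩, neg_neg]
  rw [smul_neg, smul_neg, ← neg_add, h, neg_neg]

theorem two_le_ncard_extremePoints {K : Set E} (hK : K = -K) (hc : IsCompact K)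
    (hne : K.Nonempty) (h0 : 0 ∉ K.extremePoints ℝ) (hfin : (K.extremePoints ℝ).Finite) :
    2 ≤ (K.extremePoints ℝ).ncard := by
  obtain ⟨e, he⟩ := hc.extremePoints_nonempty hne
  refine (one_lt_ncard hfin).2 ⟨e, he, -e, neg_mem_extremePoints hK he, fun h => h0 ?_⟩
  have h1 : (2 : ℝ) • e = 0 := by rw [two_smul, ← eq_neg_iff_add_eq_zero, ← h]
  rwa [(smul_eq_zero.1 h1).resolve_left two_ne_zero] at he

theorem inner_eq_ofLp_dotProduct (x y : E) : inner ℝ x y = x.ofLp ⬝ᵥ y.ofLp := by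
  rw [EuclideanSpace.inner_eq_star_dotProduct, star_trivial, dotProduct_comm]

/-- A linear functional on a compact convex set is bounded by its bound on extreme points. -/
theorem inner_le_of_forall_extremePoints {K : Set E} (hc : IsCompact K) (hK : Convex ℝ K)
    {x : E} {c : ℝ} (h : ∀ g ∈ K.extremePoints ℝ, inner ℝ g x ≤ c) {g : E} (hg : g ∈ K) :
    inner ℝ g x ≤ c := by
  rw [← closure_convexHull_extremePoints hc hK] at hg
  have : closure (convexHull ℝ (K.extremePoints ℝ)) ⊆ {g | inner ℝ g x ≤ c} :=
    closure_minimal (convexHull_min h (convex_halfSpace_le ⟨fun a b => inner_add_left a b x,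
      fun c a => by simp [real_inner_smul_left]⟩ c)) (isClosed_le (by fun_prop) continuous_const)
  exact this hg

/-- The inequality for the extreme points of a symmetric convex body and of its polar. -/
theorem natCast_le_log_mul_log_extremePoints (hn : 0 < n) {P : Set E} (hsymm : P = -P)
    (hV : (P.extremePoints ℝ).Finite) (hP : P = convexHull ℝ (P.extremePoints ℝ))
    {r : ℝ} (hr : 0 < r) (hball : Metric.closedBall 0 r ⊆ P)
    (hW : ((polarBody P).extremePoints ℝ).Finite) :
    (n : ℝ) ≤ 16 * (Real.log (P.extremePoints ℝ).ncard *
      Real.log ((polarBody P).extremePoints ℝ).ncard) := by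
  have : Nonempty (Fin n) := ⟨⟨0, hn⟩⟩
  obtain ⟨u, hu⟩ := exists_ne (0 : E)
  have hscale : ∀ z : E, z ≠ 0 → (r / ‖z‖) • z ∈ P := fun z hz => hball (by
    rw [mem_closedBall_zero_iff, norm_smul, Real.norm_of_nonneg (by positivity),
      div_mul_cancel₀ _ (norm_pos_iff.2 hz).ne'])
  have hneg : ∀ x ∈ P, -x ∈ P := fun x hx => by
    rw [hsymm] at hx
    exact hx
  have hpolar : polarBody P = polarBody (P.extremePoints ℝ) := by
    conv_lhs => rw [hP, polarBody_convexHull]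
  have hKc : IsCompact (polarBody P) := isCompact_polarBody hr hball
  have hKsymm : polarBody P = -polarBody P := by
    ext f
    refine ⟨fun hf v hv => ?_, fun hf v hv => ?_⟩
    · simpa using hf (-v) (hneg v hv)
    · simpa using hf (-v) (hneg v hv)
  have hPc : IsCompact P := by
    rw [hP]
    exact hV.isCompact_convexHull ℝ
  have hM : 2 ≤ (P.extremePoints ℝ).ncard := by
    refine two_le_ncard_extremePoints hsymm hPc ⟨_, hscale u hu⟩ (fun h0 => ?_) hV
    have h1 := h0.2 (hscale u hu) (hneg _ (hscale u hu))
      ⟨1 / 2, 1 / 2, by norm_num, by norm_num, by norm_num, by module⟩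
    exact (smul_ne_zero (div_pos hr (norm_pos_iff.2 hu)).ne' hu) h1
  have hN : 2 ≤ ((polarBody P).extremePoints ℝ).ncard := by
    refine two_le_ncard_extremePoints hKsymm hKc ⟨0, fun v _ => by simp⟩ (fun h0 => hu ?_) hW
    rw [hpolar] at h0
    exact eq_zero_of_mem_extremePoints_polarBody hV h0 (by simp)
  have := hV.fintype
  have := hW.fintype
  have hspan : ∀ x : Fin n → ℝ, (∀ v : P.extremePoints ℝ, v.1.ofLp ⬝ᵥ x = 0) → x = 0 := by
    intro x hx
    by_contra hx0
    have hx0' : WithLp.toLp 2 x ≠ (0 : E) := fun h => hx0 (congrArg WithLp.ofLp h)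
    have h1 : P ⊆ {p : E | inner ℝ p (WithLp.toLp 2 x) = 0} := by
      rw [hP]
      refine convexHull_min (fun v hv => ?_) (convex_hyperplane
        ⟨fun a b => inner_add_left a b _, fun c a => by simp [real_inner_smul_left]⟩ 0)
      exact (inner_eq_ofLp_dotProduct _ _).trans (hx ⟨v, hv⟩)
    have h2 := h1 (hscale _ hx0')
    rw [mem_ofPred_eq, real_inner_smul_left] at h2
    exact mul_ne_zero (div_pos hr (norm_pos_iff.2 hx0')).ne' (inner_self_ne_zero.2 hx0') h2
  have hvw : ∀ (v : P.extremePoints ℝ) (w : (polarBody P).extremePoints ℝ),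
      |v.1.ofLp ⬝ᵥ w.1.ofLp| ≤ 1 := fun v w => by
    rw [← inner_eq_ofLp_dotProduct, real_inner_comm, abs_le']
    refine ⟨w.2.1 v v.2.1, ?_⟩
    rw [← inner_neg_right]
    exact w.2.1 _ (hneg _ v.2.1)
  rw [← Nat.card_coe_set_eq, Nat.card_eq_fintype_card] at hM hN ⊢
  rw [← Nat.card_coe_set_eq, Nat.card_eq_fintype_card]
  obtain ⟨x, y, hxy, hx, hy⟩ := exists_dotProduct_eq_and_le hn hM hN hspan hvw
  set L := Real.log (Fintype.card (P.extremePoints ℝ)) with hL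
  set L' := Real.log (Fintype.card ((polarBody P).extremePoints ℝ)) with hL'
  have hL0 : 0 < L := Real.log_pos (by exact_mod_cast hM)
  have hL'0 : 0 < L' := Real.log_pos (by exact_mod_cast hN)
  have hn' : (0 : ℝ) < n := Nat.cast_pos.2 hn
  obtain ⟨μ, hμ⟩ : ∃ μ, μ = 2 * Real.sqrt n * Real.sqrt L := ⟨_, rfl⟩
  have hμ0 : 0 < μ := by rw [hμ]; positivity
  have hyK : μ⁻¹ • WithLp.toLp 2 y ∈ polarBody P := by
    rw [hpolar]
    intro v hv
    rw [real_inner_smul_left, real_inner_comm, inner_eq_ofLp_dotProduct,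
      inv_mul_le_iff₀ hμ0, mul_one, hμ]
    exact hy ⟨v, hv⟩
  have hfin : inner ℝ (μ⁻¹ • WithLp.toLp 2 y) (WithLp.toLp 2 x) ≤ 2 * Real.sqrt L' :=
    inner_le_of_forall_extremePoints hKc (convex_polarBody P)
      (fun g hg => (inner_eq_ofLp_dotProduct _ _).trans_le (hx ⟨g, hg⟩)) hyK
  rw [real_inner_smul_left, inv_mul_le_iff₀ hμ0, inner_eq_ofLp_dotProduct, dotProduct_comm, hxy,
    hμ] at hfin
  have hsq : (n : ℝ) ^ 2 ≤ (2 * Real.sqrt n * Real.sqrt L * (2 * Real.sqrt L')) ^ 2 := by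
    gcongr
  have h3 : (2 * Real.sqrt n * Real.sqrt L * (2 * Real.sqrt L')) ^ 2 = n * (16 * (L * L')) := by
    rw [mul_pow, mul_pow, mul_pow, mul_pow, Real.sq_sqrt hn'.le, Real.sq_sqrt hL0.le,
      Real.sq_sqrt hL'0.le]
    ring
  rw [h3, pow_two] at hsq
  exact le_of_mul_le_mul_left hsq hn'

end Polar

/-- **Figiel–Lindenstrauss–Milman.** There is an absolute constant `c > 0` such that every
origin-symmetric convex polytope `P ⊆ ℝⁿ` with nonempty interior satisfies
`log |V| * log |𝓕| ≥ c * n`, where `V` is the set of vertices and `𝓕` the set of facets. -/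
theorem flm_symmetric :
    ∃ c : ℝ, 0 < c ∧
      ∀ (n : ℕ), 0 < n →
        ∀ S : Finset (EuclideanSpace ℝ (Fin n)),
          ∀ P : Set (EuclideanSpace ℝ (Fin n)), P = convexHull ℝ (S : Set (EuclideanSpace ℝ (Fin n))) →
            (interior P).Nonempty → P = -P →
              Real.log ((Set.extremePoints ℝ P).ncard) *
                  Real.log ({F : Set (EuclideanSpace ℝ (Fin n)) | IsFaceOfDim P F (n - 1)}.ncard)
                ≥ c * n := by
  refine ⟨1 / 16, by norm_num, fun n hn S P hPS hint hsymm => ?_⟩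
  have hPconv : Convex ℝ P := hPS ▸ convex_convexHull ℝ _
  have hPc : IsCompact P := hPS ▸ S.finite_toSet.isCompact_convexHull ℝ
  have hV : (P.extremePoints ℝ).Finite :=
    S.finite_toSet.subset (hPS ▸ extremePoints_convexHull_subset)
  have hP : P = convexHull ℝ (P.extremePoints ℝ) := by
    rw [← (hV.isClosed_convexHull ℝ).closure_eq, closure_convexHull_extremePoints hPc hPconv]
  obtain ⟨x, hx⟩ := hint
  have hx' : -x ∈ interior P := by
    rw [hsymm]
    change -x ∈ interior ((Homeomorph.neg _) ⁻¹' P)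
    rw [← (Homeomorph.neg _).preimage_interior]
    simpa using hx
  have h0 : (0 : EuclideanSpace ℝ (Fin n)) ∈ interior P := by
    have := hPconv.interior hx hx' (show (0 : ℝ) ≤ 1 / 2 by norm_num)
      (show (0 : ℝ) ≤ 1 / 2 by norm_num) (by norm_num)
    simpa using this
  obtain ⟨r, hr, hball⟩ := Metric.nhds_basis_closedBall.mem_iff.1 (mem_interior_iff_mem_nhds.1 h0)
  have hpolar : polarBody P = polarBody (P.extremePoints ℝ) := by
    conv_lhs => rw [hP, polarBody_convexHull]
  have hmaps : MapsTo (hyperplaneFace P) ((polarBody P).extremePoints ℝ)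
      {F | IsFaceOfDim P F (n - 1)} := fun f hf => by
    rw [hpolar] at hf
    have := isFaceOfDim_hyperplaneFace hn hV hf
    rwa [← hP] at this
  have hinj : InjOn (hyperplaneFace P) ((polarBody P).extremePoints ℝ) := by
    have := hyperplaneFace_injOn hV
    rwa [← hP, ← hpolar] at this
  have hfaces : {F | IsFaceOfDim P F (n - 1)}.Finite := by
    have := finite_setOf_convex_isExtreme hV
    rw [← hP] at this
    exact this.subset fun F hF => ⟨hF.2.1, hF.2.2.1⟩
  have hW : ((polarBody P).extremePoints ℝ).Finite := Finite.of_injOn hmaps hinj hfaces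
  have hmain := natCast_le_log_mul_log_extremePoints hn hsymm hV hP hr hball hW
  have hcard := ncard_le_ncard_of_injOn _ hmaps hinj hfaces
  have hlog : Real.log ((polarBody P).extremePoints ℝ).ncard
      ≤ Real.log {F | IsFaceOfDim P F (n - 1)}.ncard := by
    rcases Nat.eq_zero_or_pos ((polarBody P).extremePoints ℝ).ncard with h | h
    · rw [h]
      simpa using Real.log_natCast_nonneg _
    · exact Real.log_le_log (Nat.cast_pos.2 h) (Nat.cast_le.2 hcard)
  have hprod := mul_le_mul_of_nonneg_left hlog
    (Real.log_natCast_nonneg (P.extremePoints ℝ).ncard)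
  linarith
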